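/- arXiv:2009.11057 — 3 statements merged into one kernel-verified Lean document; each statement's English description precedes it below -/
import Mathlib

section
/- Let ρ : ℝ^d → ℝ be measurable with 0 ≤ ρ ≤ R and v : ℝ^d → ℝ^d a bounded measurable vector field, and let g, m > 0. Fix x ∈ ℝ^d, h ∈ (0,1], ℓ₀ > 0 and constants A, B, M > 0, and suppose that for every ℓ ∈ (0, ℓ₀]: δv(ℓ;x) ≤ A ℓ^h, δρ(ℓ;x) ≤ B ℓ, and ρ̄_ℓ(x) ≥ 1/M. Then there exists a constant C, depending only on G, d, R, A, B, M, g, m, h and ℓ₀, such that the baropycnal work satisfies |Λ^{(p)}_ℓ(x)| ≤ C ℓ^{h+1} for all ℓ ∈ (0, ℓ₀]. -/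
/-!
The baropycnal work is `ρ̄⁻¹` times the inner product of `∇p̄` with the cumulant `τ̄(ρ, v)`. Each
factor only sees increments of the fields inside the ball of radius `ℓ` around `x`. After the
change of variables `r = ℓ u`, a coarse-grained field is `∫ G(u) a(x + ℓ u) du`.

* `tauV_norm_le`: since `∫ G = 1`, both fields can be centred inside the cumulant,
  `τ̄(ρ, v) = ∫ G(u) (ρ(x + ℓ u) - ρ̄) (v(x + ℓ u) - v(x)) du`, so that
  `‖τ̄‖ ≤ 2 (B ℓ) (A ℓ ^ h)`.
* `gradient_cg_norm_le`: shifting `x` by `k` amounts to shifting `G` by `k / ℓ`, and the shifted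
  kernels have equal integrals, so `ā(x + k) - ā(x)` is the integral of
  `(G(u - k / ℓ) - G(u)) (a(x + ℓ u) - a(x))`. As `G` is Lipschitz, this is at most a constant times
  `‖k‖ / ℓ` times the increment of `a`. For `p = g ρ² / (2 m²)` the increment is `O(ℓ)`, because
  `ρ` is bounded, hence `∇p̄ = O(1)`.

The factor `ρ̄⁻¹` is at most `M`, and the product is `O(ℓ ^ (h + 1))`.
-/


open MeasureTheory Metric
open scoped RealInnerProductSpace ENNReal

noncomputable section

abbrev Euc (d : ℕ) := EuclideanSpace ℝ (Fin d)

namespace QT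

variable {d : ℕ}

/-- `G` is a mollifier: smooth, nonnegative, supported in the open unit ball, integral one. -/
structure IsMollifier {d : ℕ} (G : Euc d → ℝ) : Prop where
  smooth : ContDiff ℝ (⊤ : ℕ∞) G
  nonneg : ∀ r, 0 ≤ G r
  supp : tsupport G ⊆ ball (0 : Euc d) 1
  integral_one : ∫ r, G r = 1

/-- The rescaled mollifier `G_ℓ(r) = ℓ^{-d} G(r/ℓ)`. -/
def resc (G : Euc d → ℝ) (ℓ : ℝ) (r : Euc d) : ℝ := (ℓ ^ d)⁻¹ * G (ℓ⁻¹ • r)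

/-- Coarse-grained field `ā_ℓ(x) = ∫ G_ℓ(r) a(x+r) dr`. -/
def cg {E : Type*} [NormedAddCommGroup E] [NormedSpace ℝ E]
    (G : Euc d → ℝ) (ℓ : ℝ) (a : Euc d → E) (x : Euc d) : E :=
  ∫ r, resc G ℓ r • a (x + r)

/-- Increment `δa(r;x) = a(x+r) - a(x)`. -/
def incr {E : Type*} [NormedAddCommGroup E] (a : Euc d → E) (r x : Euc d) : E :=
  a (x + r) - a x

/-- `δa(ℓ;x) = sup_{|r|<ℓ} |δa(r;x)|`. -/
def supIncr {E : Type*} [NormedAddCommGroup E] (a : Euc d → E) (ℓ : ℝ) (x : Euc d) : ℝ :=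
  ⨆ r ∈ ball (0 : Euc d) ℓ, ‖incr a r x‖

/-- Second-order coarse-graining cumulant `τ̄_ℓ(f,g)`. -/
def tau2 (G : Euc d → ℝ) (ℓ : ℝ) (f g : Euc d → ℝ) (x : Euc d) : ℝ :=
  cg G ℓ (fun y => f y * g y) x - cg G ℓ f x * cg G ℓ g x

/-- `τ̄_ℓ(ρ, v)` for a scalar density and a vector field. -/
def tauV (G : Euc d → ℝ) (ℓ : ℝ) (ρ : Euc d → ℝ) (v : Euc d → Euc d) (x : Euc d) : Euc d :=
  cg G ℓ (fun y => ρ y • v y) x - cg G ℓ ρ x • cg G ℓ v x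

/-- `i`-th standard basis vector. -/
def e (d : ℕ) (i : Fin d) : Euc d := EuclideanSpace.single i (1 : ℝ)

/-- Partial derivative `∂_i f(x)`. -/
def pd (i : Fin d) (f : Euc d → ℝ) (x : Euc d) : ℝ := fderiv ℝ f x (e d i)

/-- Laplacian. -/
def lap (f : Euc d → ℝ) (x : Euc d) : ℝ := ∑ i, pd i (fun y => pd i f y) x

/-- Gradient matrix `(∇v)_{ij} = ∂_i v_j`. -/
def gradMat (v : Euc d → Euc d) (x : Euc d) : Matrix (Fin d) (Fin d) ℝ :=
  Matrix.of fun i j => pd i (fun y => v y j) x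

/-- Frobenius norm of a matrix. -/
def frobNorm (A : Matrix (Fin d) (Fin d) ℝ) : ℝ := Real.sqrt (∑ i, ∑ j, A i j ^ 2)

/-- Frobenius inner product `A : B`. -/
def frobInner (A B : Matrix (Fin d) (Fin d) ℝ) : ℝ := ∑ i, ∑ j, A i j * B i j

/-- Favre-averaged velocity `ṽ_ℓ = \overline{(ρv)}_ℓ/ρ̄_ℓ` where `ρ̄_ℓ > 0`, `0` otherwise. -/
def favre (G : Euc d → ℝ) (ℓ : ℝ) (ρ : Euc d → ℝ) (v : Euc d → Euc d) (x : Euc d) : Euc d :=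
  if 0 < cg G ℓ ρ x then (cg G ℓ ρ x)⁻¹ • cg G ℓ (fun y => ρ y • v y) x else 0

/-- Favre stress `τ̃_ℓ(v,v) = \overline{(ρ v⊗v)}_ℓ/ρ̄_ℓ − ṽ_ℓ ⊗ ṽ_ℓ`. -/
def favreStress (G : Euc d → ℝ) (ℓ : ℝ) (ρ : Euc d → ℝ) (v : Euc d → Euc d) (x : Euc d) :
    Matrix (Fin d) (Fin d) ℝ :=
  Matrix.of fun i j =>
    (cg G ℓ ρ x)⁻¹ * cg G ℓ (fun y => ρ y * (v y i * v y j)) x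
      - favre G ℓ ρ v x i * favre G ℓ ρ v x j

/-- Deformation work `Π_ℓ = −ρ̄_ℓ ∇ṽ_ℓ : τ̃_ℓ(v,v)`. -/
def deformWork (G : Euc d → ℝ) (ℓ : ℝ) (ρ : Euc d → ℝ) (v : Euc d → Euc d) (x : Euc d) : ℝ :=
  -(cg G ℓ ρ x * frobInner (gradMat (favre G ℓ ρ v) x) (favreStress G ℓ ρ v x))

/-- The periodic box `[0,𝓛]^d`. -/
def box (d : ℕ) (L : ℝ) : Set (Euc d) := {x | ∀ i, x i ∈ Set.Icc (0 : ℝ) L}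

/-- Normalized measure on the periodic box, so that `eLpNorm · p (boxMeasure d 𝓛)`
is the normalized `L^p` norm `(𝓛^{-d}∫_{[0,𝓛]^d}|f|^p)^{1/p}` (ess-sup for `p = ∞`). -/
def boxMeasure (d : ℕ) (L : ℝ) : Measure (Euc d) :=
  (ENNReal.ofReal (L ^ d))⁻¹ • (volume.restrict (box d L))

/-- `𝓛`-periodicity in each coordinate. -/
def PeriodicF {E : Type*} (L : ℝ) (f : Euc d → E) : Prop :=
  ∀ (x : Euc d) (i : Fin d), f (x + EuclideanSpace.single i L) = f x

/-- Quantum stress `Σ = (ħ²/4m²)(Δρ)I − (ħ²/m²)∇√ρ ⊗ ∇√ρ`. -/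
def qStress (hb m : ℝ) (ρ : Euc d → ℝ) (x : Euc d) : Matrix (Fin d) (Fin d) ℝ :=
  Matrix.of fun i j =>
    (hb ^ 2 / (4 * m ^ 2)) * lap ρ x * (if i = j then (1 : ℝ) else 0)
      - (hb ^ 2 / m ^ 2) * (gradient (fun y => Real.sqrt (ρ y)) x i
          * gradient (fun y => Real.sqrt (ρ y)) x j)

/-- Coarse-grained quantum stress `Σ̄_ℓ`. -/
def cgStress (G : Euc d → ℝ) (ℓ hb m : ℝ) (ρ : Euc d → ℝ) (x : Euc d) :
    Matrix (Fin d) (Fin d) ℝ :=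
  Matrix.of fun i j => cg G ℓ (fun z => qStress hb m ρ z i j) x

/-- Row-wise divergence of the coarse-grained quantum stress, `(∇·Σ̄_ℓ)_j = ∑_i ∂_i (Σ̄_ℓ)_{ij}`. -/
def divCgStress (G : Euc d → ℝ) (ℓ hb m : ℝ) (ρ : Euc d → ℝ) (x : Euc d) : Euc d :=
  (EuclideanSpace.equiv (Fin d) ℝ).symm
    (fun j => ∑ i, pd i (fun y => cgStress G ℓ hb m ρ y i j) x)

/-- Quantum baropycnal work `Λ^{(Σ)}_ℓ = −(1/ρ̄_ℓ)(∇·Σ̄_ℓ)·τ̄_ℓ(ρ,v)`. -/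
def qBaroWork (G : Euc d → ℝ) (ℓ hb m : ℝ) (ρ : Euc d → ℝ) (v : Euc d → Euc d) (x : Euc d) : ℝ :=
  -((cg G ℓ ρ x)⁻¹ * ⟪divCgStress G ℓ hb m ρ x, tauV G ℓ ρ v x⟫)

end QT

namespace QT

/-- Baropycnal work `Λ^{(p)}_ℓ = (1/ρ̄_ℓ) ∇p̄_ℓ · τ̄_ℓ(ρ,v)` with pressure `p = gρ²/(2m²)`. -/
def baroWork (G : Euc d → ℝ) (ℓ gc m : ℝ) (ρ : Euc d → ℝ) (v : Euc d → Euc d)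
    (x : Euc d) : ℝ :=
  (cg G ℓ ρ x)⁻¹ *
    ⟪gradient (cg G ℓ (fun y => gc * ρ y ^ 2 / (2 * m ^ 2))) x, tauV G ℓ ρ v x⟫

end QT


namespace QT

lemma IsMollifier.hasCompactSupport {d : ℕ} {G : Euc d → ℝ} (hG : IsMollifier G) :
    HasCompactSupport G :=
  (isCompact_closedBall (0 : Euc d) 1).of_isClosed_subset (isClosed_tsupport G)
    (hG.supp.trans ball_subset_closedBall)

lemma IsMollifier.integrable {d : ℕ} {G : Euc d → ℝ} (hG : IsMollifier G) : Integrable G :=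
  hG.smooth.continuous.integrable_of_hasCompactSupport hG.hasCompactSupport

lemma IsMollifier.eq_zero {d : ℕ} {G : Euc d → ℝ} (hG : IsMollifier G) {u : Euc d}
    (hu : u ∉ ball (0 : Euc d) 1) : G u = 0 :=
  image_eq_zero_of_notMem_tsupport fun h => hu (hG.supp h)

lemma cg_eq {d : ℕ} {E : Type*} [NormedAddCommGroup E] [NormedSpace ℝ E]
    (G : Euc d → ℝ) {ℓ : ℝ} (hℓ : 0 < ℓ) (a : Euc d → E) (x : Euc d) :
    cg G ℓ a x = ∫ u, G u • a (x + ℓ • u) := by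
  have h := Measure.integral_comp_inv_smul_of_nonneg (volume : Measure (Euc d))
    (fun u => G u • a (x + ℓ • u)) hℓ.le
  have h2 : cg G ℓ a x = (ℓ ^ d)⁻¹ • ∫ r, G (ℓ⁻¹ • r) • a (x + ℓ • (ℓ⁻¹ • r)) := by
    rw [cg, ← integral_smul]
    refine integral_congr_ae (Filter.Eventually.of_forall fun r => ?_)
    simp only [resc, smul_smul, mul_inv_cancel₀ hℓ.ne', one_smul]
  rw [h2, h, finrank_euclideanSpace_fin, smul_smul, inv_mul_cancel₀ (by positivity), one_smul]

lemma integrable_smul_bdd {d : ℕ} {E : Type*} [NormedAddCommGroup E] [NormedSpace ℝ E]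
    {G : Euc d → ℝ} (hG : Integrable G) {b : Euc d → E} (hb : AEStronglyMeasurable b volume)
    {C : ℝ} (hC : ∀ u, ‖b u‖ ≤ C) : Integrable fun u => G u • b u := by
  refine (hG.norm.mul_const C).mono' (hG.aestronglyMeasurable.smul hb)
    (Filter.Eventually.of_forall fun u => ?_)
  rw [norm_smul]
  exact mul_le_mul_of_nonneg_left (hC u) (norm_nonneg _)

/-- For a bounded field the supremum defining `supIncr` is a genuine one, so it does bound the
increments. -/
lemma norm_incr_le_supIncr {d : ℕ} {E : Type*} [NormedAddCommGroup E] {a : Euc d → E} {C : ℝ}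
    (hC : ∀ y, ‖a y‖ ≤ C) {ℓ : ℝ} (x : Euc d) {r : Euc d} (hr : r ∈ ball (0 : Euc d) ℓ) :
    ‖a (x + r) - a x‖ ≤ supIncr a ℓ x := by
  have hC0 : 0 ≤ C := (norm_nonneg _).trans (hC x)
  have hb : BddAbove (Set.range fun r : Euc d => ⨆ _ : r ∈ ball (0 : Euc d) ℓ, ‖incr a r x‖) := by
    refine ⟨C + C, ?_⟩
    rintro _ ⟨r, rfl⟩
    refine Real.iSup_le (fun _ => ?_) (by positivity)
    exact (norm_sub_le _ _).trans (add_le_add (hC _) (hC _))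
  have h := le_ciSup hb r
  have h2 : (⨆ _ : r ∈ ball (0 : Euc d) ℓ, ‖incr a r x‖) = ‖a (x + r) - a x‖ := ciSup_pos hr
  rw [← h2]
  exact h

/-- An average against a mollifier is bounded by any bound valid on the unit ball. -/
lemma norm_integral_le {d : ℕ} {E : Type*} [NormedAddCommGroup E] [NormedSpace ℝ E]
    {G : Euc d → ℝ} (hG : IsMollifier G) {b : Euc d → E} {C : ℝ}
    (hC : ∀ u ∈ ball (0 : Euc d) 1, ‖b u‖ ≤ C) : ‖∫ u, G u • b u‖ ≤ C := by
  have h : ‖∫ u, G u • b u‖ ≤ ∫ u, G u * C := by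
    refine norm_integral_le_of_norm_le (hG.integrable.mul_const C)
      (Filter.Eventually.of_forall fun u => ?_)
    by_cases hu : u ∈ ball (0 : Euc d) 1
    · rw [norm_smul, Real.norm_of_nonneg (hG.nonneg u)]
      exact mul_le_mul_of_nonneg_left (hC u hu) (hG.nonneg u)
    · simp [hG.eq_zero hu]
  rwa [integral_mul_const, hG.integral_one, one_mul] at h

lemma smul_mem_ball {d : ℕ} {ℓ : ℝ} (hℓ : 0 < ℓ) {u : Euc d} (hu : u ∈ ball (0 : Euc d) 1) :
    ℓ • u ∈ ball (0 : Euc d) ℓ := by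
  rw [mem_ball_zero_iff] at hu ⊢
  rw [norm_smul, Real.norm_of_nonneg hℓ.le]
  nlinarith

lemma tauV_norm_le {d : ℕ} {G : Euc d → ℝ} (hG : IsMollifier G) {ℓ : ℝ} (hℓ : 0 < ℓ)
    {ρ : Euc d → ℝ} {v : Euc d → Euc d} (hρ : Measurable ρ) (hv : Measurable v)
    {R Cv P V : ℝ} (hR : ∀ y, ‖ρ y‖ ≤ R) (hCv : ∀ y, ‖v y‖ ≤ Cv) {x : Euc d}
    (hP : ∀ r ∈ ball (0 : Euc d) ℓ, ‖ρ (x + r) - ρ x‖ ≤ P)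
    (hV : ∀ r ∈ ball (0 : Euc d) ℓ, ‖v (x + r) - v x‖ ≤ V) :
    ‖tauV G ℓ ρ v x‖ ≤ 2 * P * V := by
  have hP0 : 0 ≤ P := (norm_nonneg _).trans (hP 0 (mem_ball_self hℓ))
  have hm : Measurable fun u : Euc d => x + ℓ • u := by fun_prop
  have iρ : Integrable fun u => G u • ρ (x + ℓ • u) :=
    integrable_smul_bdd hG.integrable (hρ.comp hm).aestronglyMeasurable fun u => hR _
  have iv : Integrable fun u => G u • v (x + ℓ • u) :=
    integrable_smul_bdd hG.integrable (hv.comp hm).aestronglyMeasurable fun u => hCv _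
  have iρv : Integrable fun u => G u • (ρ (x + ℓ • u) • v (x + ℓ • u)) := by
    refine integrable_smul_bdd (C := R * Cv) hG.integrable
      ((hρ.comp hm).smul (hv.comp hm)).aestronglyMeasurable fun u => ?_
    rw [norm_smul]
    exact mul_le_mul (hR _) (hCv _) (norm_nonneg _) ((norm_nonneg _).trans (hR x))
  set q := cg G ℓ ρ x with hq
  have hq' : q = ∫ u, G u • ρ (x + ℓ • u) := cg_eq G hℓ ρ x
  have hqx : ‖q - ρ x‖ ≤ P := by
    have : q - ρ x = ∫ u, G u • (ρ (x + ℓ • u) - ρ x) := by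
      simp_rw [smul_sub]
      rw [integral_sub iρ (hG.integrable.smul_const _), integral_smul_const, hG.integral_one,
        one_smul, hq']
    rw [this]
    exact norm_integral_le hG fun u hu => hP _ (smul_mem_ball hℓ hu)
  have key : tauV G ℓ ρ v x
      = ∫ u, G u • ((ρ (x + ℓ • u) - q) • (v (x + ℓ • u) - v x)) := by
    have e1 : (fun u => G u • ((ρ (x + ℓ • u) - q) • (v (x + ℓ • u) - v x)))
        = fun u => (G u • (ρ (x + ℓ • u) • v (x + ℓ • u)) - q • (G u • v (x + ℓ • u)))
          - ((G u • ρ (x + ℓ • u)) • v x - G u • (q • v x)) := by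
      funext u
      simp only [smul_sub, sub_smul, smul_smul, smul_eq_mul]
      rw [mul_comm q (G u)]
    have j1 : Integrable fun u => q • (G u • v (x + ℓ • u)) := iv.smul q
    have j2 : Integrable fun u => (G u • ρ (x + ℓ • u)) • v x := iρ.smul_const _
    have j3 : Integrable fun u => G u • (q • v x) := hG.integrable.smul_const _
    have j4 : Integrable fun u => G u • (ρ (x + ℓ • u) • v (x + ℓ • u))
        - q • (G u • v (x + ℓ • u)) := iρv.sub j1
    have j5 : Integrable fun u => (G u • ρ (x + ℓ • u)) • v x - G u • (q • v x) := j2.sub j3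
    rw [e1, integral_sub j4 j5, integral_sub iρv j1, integral_sub j2 j3, integral_smul_const,
      integral_smul_const, hG.integral_one, ← hq', one_smul, sub_self, sub_zero, integral_smul,
      ← cg_eq G hℓ v x, tauV, cg_eq G hℓ (fun y => ρ y • v y) x]
  rw [key]
  refine norm_integral_le hG fun u hu => ?_
  have hu' := smul_mem_ball hℓ hu
  rw [norm_smul]
  refine mul_le_mul ?_ (hV _ hu') (norm_nonneg _) (by positivity)
  calc ‖ρ (x + ℓ • u) - q‖ = ‖(ρ (x + ℓ • u) - ρ x) - (q - ρ x)‖ := by congr 1; ring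
    _ ≤ P + P := (norm_sub_le _ _).trans (add_le_add (hP _ hu') hqx)
    _ = 2 * P := by ring

/-- The gradient of a coarse-grained field is at most `L |B₁| / ℓ` times the increment of the field,
where `L` is a Lipschitz constant of the mollifier. A difference quotient estimate suffices: where
the derivative does not exist, `gradient` is zero by convention. -/
lemma gradient_cg_norm_le {d : ℕ} {G : Euc d → ℝ} (hG : IsMollifier G) {L : NNReal}
    (hL : LipschitzWith L G) {ℓ : ℝ} (hℓ : 0 < ℓ) {f : Euc d → ℝ} (hf : Measurable f)
    {C D : ℝ} (hC : ∀ y, ‖f y‖ ≤ C) {x : Euc d}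
    (hD : ∀ r ∈ ball (0 : Euc d) ℓ, ‖f (x + r) - f x‖ ≤ D) :
    ‖gradient (cg G ℓ f) x‖ ≤ L * volume.real (ball (0 : Euc d) 1) * D / ℓ := by
  have hD0 : 0 ≤ D := (norm_nonneg _).trans (hD 0 (mem_ball_self hℓ))
  rw [gradient, LinearIsometryEquiv.norm_map]
  by_cases hdiff : DifferentiableAt ℝ (cg G ℓ f) x
  swap
  · rw [fderiv_zero_of_not_differentiableAt hdiff, norm_zero]
    positivity
  -- The support of `G` stays inside the unit ball under small shifts.
  obtain ⟨s, hs, hsupp⟩ := exists_lt_subset_ball (isClosed_tsupport G) hG.supp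
  refine hdiff.hasFDerivAt.le_of_lip' (by positivity) ?_
  have hnear : ball x (ℓ * (1 - s)) ∈ nhds x := ball_mem_nhds _ (mul_pos hℓ (by linarith))
  filter_upwards [hnear] with y hy
  set w : Euc d := ℓ⁻¹ • (y - x) with hw
  have hyw : y = x + ℓ • w := by
    rw [hw, smul_smul, mul_inv_cancel₀ hℓ.ne', one_smul, add_sub_cancel]
  have hwn : ‖w‖ = ‖y - x‖ / ℓ := by
    rw [hw, norm_smul, norm_inv, Real.norm_of_nonneg hℓ.le, div_eq_inv_mul]
  have hws : ‖w‖ < 1 - s := by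
    rw [hwn, div_lt_iff₀ hℓ, mul_comm, ← dist_eq_norm]
    exact hy
  have iG' : Integrable fun u => G (u - w) := hG.integrable.comp_sub_right w
  have hm : Measurable fun u : Euc d => x + ℓ • u := by fun_prop
  have mf := (hf.comp hm).aestronglyMeasurable (μ := (volume : Measure (Euc d)))
  have i1 : Integrable fun u => G u • f (x + ℓ • u) :=
    integrable_smul_bdd hG.integrable mf fun u => hC _
  have i2 : Integrable fun u => G (u - w) • f (x + ℓ • u) :=
    integrable_smul_bdd iG' mf fun u => hC _
  have hshift : cg G ℓ f y = ∫ u, G (u - w) • f (x + ℓ • u) := by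
    rw [cg_eq G hℓ, ← integral_sub_right_eq_self (fun u => G u • f (y + ℓ • u)) w]
    refine integral_congr_ae (Filter.Eventually.of_forall fun u => ?_)
    have : y + ℓ • (u - w) = x + ℓ • u := by rw [hyw, smul_sub]; abel
    simp only [this]
  have key : cg G ℓ f y - cg G ℓ f x
      = ∫ u, (G (u - w) - G u) • (f (x + ℓ • u) - f x) := by
    have e1 : (fun u => (G (u - w) - G u) • (f (x + ℓ • u) - f x))
        = fun u => (G (u - w) • f (x + ℓ • u) - G u • f (x + ℓ • u))
          - (G (u - w) - G u) • f x := by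
      funext u
      simp only [smul_eq_mul]
      ring
    have j1 : Integrable fun u => G (u - w) • f (x + ℓ • u) - G u • f (x + ℓ • u) := i2.sub i1
    have j2 : Integrable fun u => (G (u - w) - G u) • f x := (iG'.sub hG.integrable).smul_const _
    rw [e1, integral_sub j1 j2,
      integral_sub i2 i1, integral_smul_const, integral_sub iG' hG.integrable,
      integral_sub_right_eq_self G w, sub_self, zero_smul, sub_zero, ← hshift, ← cg_eq G hℓ]
  have hzero : ∀ u ∉ ball (0 : Euc d) 1, (G (u - w) - G u) • (f (x + ℓ • u) - f x) = 0 := by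
    intro u hu
    have h1 : G (u - w) = 0 := by
      refine image_eq_zero_of_notMem_tsupport fun h => hu ?_
      have h2 := hsupp h
      rw [mem_ball_zero_iff] at h2 ⊢
      have h3 := norm_add_le (u - w) w
      rw [sub_add_cancel] at h3
      linarith
    rw [h1, hG.eq_zero hu, sub_self, zero_smul]
  rw [key, ← setIntegral_eq_integral_of_forall_compl_eq_zero hzero]
  refine (norm_setIntegral_le_of_norm_le_const (C := L * ‖w‖ * D) measure_ball_lt_top
    fun u hu => ?_).trans (le_of_eq ?_)
  · rw [norm_smul]
    refine mul_le_mul ?_ (hD _ (smul_mem_ball hℓ hu)) (norm_nonneg _) (by positivity)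
    have := hL.norm_sub_le (u - w) u
    rwa [sub_sub_cancel_left, norm_neg] at this
  · rw [hwn]
    ring

end QT

open QT in
/-- baropycnal work bound `|Λ^{(p)}_ℓ(x)| ≤ C ℓ^{h+1}` for `ℓ ∈ (0,ℓ₀]`,
with `C` depending only on `G, d, R, A, B, M, g, m, h, ℓ₀`. -/
theorem baroWork_le {d : ℕ} (hd : 1 ≤ d)
    (G : Euc d → ℝ) (hG : IsMollifier G)
    (R A B M gc m h ℓ₀ : ℝ) (hR : 0 < R) (hA : 0 < A) (hB : 0 < B) (hM : 0 < M)
    (hgc : 0 < gc) (hm : 0 < m) (hh : h ∈ Set.Ioc (0 : ℝ) 1) (hℓ₀ : 0 < ℓ₀) :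
    ∃ C > 0, ∀ (ρ : Euc d → ℝ) (v : Euc d → Euc d) (Cv : ℝ) (x : Euc d),
      Measurable ρ → (∀ y, 0 ≤ ρ y) → (∀ y, ρ y ≤ R) →
      Measurable v → (∀ y, ‖v y‖ ≤ Cv) →
      (∀ ℓ ∈ Set.Ioc (0 : ℝ) ℓ₀,
        supIncr v ℓ x ≤ A * ℓ ^ h ∧ supIncr ρ ℓ x ≤ B * ℓ ∧ 1 / M ≤ cg G ℓ ρ x) →
      ∀ ℓ ∈ Set.Ioc (0 : ℝ) ℓ₀,
        |baroWork G ℓ gc m ρ v x| ≤ C * ℓ ^ (h + 1) := by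
  obtain ⟨L, hL⟩ := hG.smooth.lipschitzWith_of_hasCompactSupport hG.hasCompactSupport (by simp)
  set K : ℝ := L * volume.real (ball (0 : Euc d) 1) * (gc * R * B / m ^ 2) with hK
  have hK0 : 0 ≤ K := by positivity
  -- The summand `1` only serves to make the constant strictly positive.
  refine ⟨M * (K * (2 * B * A)) + 1, by positivity, ?_⟩
  intro ρ v Cv x hρm hρ0 hρR hvm hvC hyp ℓ hℓ
  obtain ⟨hV, hP, hQ⟩ := hyp ℓ hℓ
  have hℓ0 : 0 < ℓ := hℓ.1
  have hρn : ∀ y, ‖ρ y‖ ≤ R := fun y => by rw [Real.norm_of_nonneg (hρ0 y)]; exact hρR y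
  have dρ : ∀ r ∈ ball (0 : Euc d) ℓ, ‖ρ (x + r) - ρ x‖ ≤ B * ℓ := fun r hr =>
    (norm_incr_le_supIncr hρn x hr).trans hP
  have dv : ∀ r ∈ ball (0 : Euc d) ℓ, ‖v (x + r) - v x‖ ≤ A * ℓ ^ h := fun r hr =>
    (norm_incr_le_supIncr hvC x hr).trans hV
  have htau := tauV_norm_le hG hℓ0 hρm hvm hρn hvC dρ dv
  have hgrad : ‖gradient (cg G ℓ (fun y => gc * ρ y ^ 2 / (2 * m ^ 2))) x‖ ≤ K := by
    have h1 := gradient_cg_norm_le hG hL hℓ0 (f := fun y => gc * ρ y ^ 2 / (2 * m ^ 2))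
      (C := gc * R ^ 2 / (2 * m ^ 2)) (D := gc * R * B / m ^ 2 * ℓ) (x := x)
      (by fun_prop) (fun y => ?_) (fun r hr => ?_)
    · refine h1.trans (le_of_eq ?_)
      rw [hK]
      field_simp
    · have := hρ0 y
      have := hρR y
      rw [Real.norm_of_nonneg (by positivity)]
      gcongr
    · have e1 : gc * ρ (x + r) ^ 2 / (2 * m ^ 2) - gc * ρ x ^ 2 / (2 * m ^ 2)
          = gc / (2 * m ^ 2) * ((ρ (x + r) + ρ x) * (ρ (x + r) - ρ x)) := by ring
      have e2 : gc * R * B / m ^ 2 * ℓ = gc / (2 * m ^ 2) * ((R + R) * (B * ℓ)) := by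
        field_simp
        ring
      rw [e1, e2, norm_mul, norm_mul, Real.norm_of_nonneg (by positivity : 0 ≤ gc / (2 * m ^ 2)),
        Real.norm_of_nonneg (add_nonneg (hρ0 _) (hρ0 _))]
      have := dρ r hr
      have := hρR (x + r)
      have := hρR x
      gcongr
  have hq : 0 < cg G ℓ ρ x := lt_of_lt_of_le (by positivity) hQ
  have hinv : |(cg G ℓ ρ x)⁻¹| ≤ M := by
    rw [abs_of_pos (inv_pos.2 hq)]
    exact inv_le_of_inv_le₀ hM (by rwa [← one_div])
  have hpow : ℓ ^ (h + 1) = ℓ ^ h * ℓ := by rw [Real.rpow_add hℓ0, Real.rpow_one]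
  rw [baroWork, abs_mul]
  calc |(cg G ℓ ρ x)⁻¹| * |⟪gradient (cg G ℓ (fun y => gc * ρ y ^ 2 / (2 * m ^ 2))) x,
        tauV G ℓ ρ v x⟫|
      ≤ M * (K * (2 * (B * ℓ) * (A * ℓ ^ h))) := by
        refine mul_le_mul hinv ((abs_real_inner_le_norm _ _).trans ?_) (abs_nonneg _) hM.le
        exact mul_le_mul hgrad htau (norm_nonneg _) hK0
    _ = M * (K * (2 * B * A)) * ℓ ^ (h + 1) := by rw [hpow]; ring
    _ ≤ (M * (K * (2 * B * A)) + 1) * ℓ ^ (h + 1) := by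
        gcongr
        linarith
end
end

section
/- Let ρ : ℝ^d → ℝ be a C² function with ρ_min ≤ ρ ≤ R and |∇ρ| ≤ K on ℝ^d, where ρ_min > 0. Let x ∈ ℝ^d, ℓ > 0 and M > 0 with ρ̄_ℓ(x) ≥ 1/M. Then the large-scale force due to quantum stress satisfies |(1/ρ̄_ℓ(x)) ∇·Σ̄_ℓ(x)| ≤ C (ħ²/m²) M [ ℓ^{−3} δρ(ℓ;x) + ℓ^{−1} K²/ρ_min ], where C is a constant depending only on G and d. -/
/-!
All derivatives are moved onto the smooth compactly supported kernel. Writing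
`corr φ a x = ∫ φ(r) a(x + r) dr`, so that coarse-graining is `corr (resc G ℓ)`, one has
`∂ᵢ (corr φ a) = -corr (∂ᵢφ) a` for continuous `a` (`pd_corr`) and
`corr φ (∂ᵢa) = -corr (∂ᵢφ) a` for `a` of class `C¹` (`corr_pd`).

* The Laplacian part of `∂ᵢ Σ̄` becomes `-∑ₖ corr (∂ₖ∂ₖ∂ᵢ G_ℓ) ρ`. A derivative of a compactly
  supported function has integral zero, so `ρ(x + r)` may be replaced by the increment
  `ρ(x + r) - ρ(x)`, which is at most `δρ(ℓ;x)` on the support of the kernel. Each derivative of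
  `G_ℓ` costs a factor `ℓ⁻¹` in `L¹`, which gives `ℓ⁻³ δρ(ℓ;x)` (`abs_corr_lap_le`).
* The remaining part carries one derivative of the kernel against `∂ᵢ√ρ ∂ⱼ√ρ`, which is bounded by
  `K² / (4 ρmin)` because `∇√ρ = ∇ρ / (2√ρ)`; this gives `ℓ⁻¹ K² / ρmin`.

The constant is assembled from the `L¹` norms of first and third derivatives of `G`.
-/

open MeasureTheory Metric
open scoped RealInnerProductSpace ENNReal

noncomputable section

/-! ### Correlations and their derivatives -/

namespace QT

/-- Correlation `∫ φ(r) a(x + r) dr` of a field `a` with a kernel `φ`. -/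
def corr {d : ℕ} (φ a : Euc d → ℝ) (x : Euc d) : ℝ := ∫ r, φ r * a (x + r)

/-- Smooth compactly supported kernels. -/
structure Ker {d : ℕ} (φ : Euc d → ℝ) : Prop where
  smooth : ContDiff ℝ (⊤ : ℕ∞) φ
  cpt : HasCompactSupport φ

theorem Ker.pd {d : ℕ} {φ : Euc d → ℝ} (h : Ker φ) (i : Fin d) : Ker (QT.pd i φ) :=
  ⟨(h.smooth.fderiv_right (m := (⊤ : ℕ∞)) (by simp)).clm_apply contDiff_const,
    h.cpt.fderiv_apply ℝ (e d i)⟩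

theorem Ker.integrable_mul {d : ℕ} {φ a : Euc d → ℝ} (h : Ker φ) (ha : Continuous a) (x : Euc d) :
    Integrable (fun r => φ r * a (x + r)) :=
  (h.smooth.continuous.mul (by fun_prop)).integrable_of_hasCompactSupport h.cpt.mul_right

theorem Ker.integrable {d : ℕ} {φ : Euc d → ℝ} (h : Ker φ) : Integrable φ :=
  h.smooth.continuous.integrable_of_hasCompactSupport h.cpt

theorem pd_corr {d : ℕ} {φ a : Euc d → ℝ} (h : Ker φ) (ha : Continuous a) (i : Fin d)
    (x : Euc d) : pd i (corr φ a) x = -corr (pd i φ) a x := by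
  set g : Euc d → ℝ := fun z => φ (-z) with hg
  have hgs : ContDiff ℝ 1 g :=
    (h.smooth.of_le (by exact_mod_cast le_top)).comp contDiff_neg
  have hgc : HasCompactSupport g := h.cpt.comp_homeomorph (Homeomorph.neg _)
  -- the correlation is the convolution of `a` with the reflected kernel
  have key : ∀ (ψ : Euc d → ℝ) (y : Euc d),
      convolution a (fun z => ψ (-z)) (ContinuousLinearMap.mul ℝ ℝ) volume y = corr ψ a y := by
    intro ψ y
    rw [convolution_def, corr, ← integral_add_left_eq_self _ y]
    refine integral_congr_ae (.of_forall fun r => ?_)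
    simp [mul_comm]
  have h1 := hgc.hasFDerivAt_convolution_right (ContinuousLinearMap.mul ℝ ℝ)
    (ha.locallyIntegrable (μ := volume)) hgs x
  have h2 : convolution a g (ContinuousLinearMap.mul ℝ ℝ) volume = corr φ a :=
    funext fun y => key φ y
  rw [h2] at h1
  rw [pd, h1.fderiv, convolution_precompR_apply _ ha.locallyIntegrable (hgc.fderiv ℝ)
    (hgs.continuous_fderiv one_ne_zero)]
  have h3 : (fun z => fderiv ℝ g z (e d i)) = fun z => (fun w => -pd i φ w) (-z) := by
    funext z
    have h4 : g = fun w => φ ((-1 : ℝ) • w) := by simp [hg]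
    rw [h4, fderiv_comp_smul]
    simp [pd]
  rw [h3, key (fun w => -pd i φ w)]
  simp [corr, integral_neg]

theorem corr_pd {d : ℕ} {φ a : Euc d → ℝ} (h : Ker φ) (ha : ContDiff ℝ 1 a) (i : Fin d)
    (x : Euc d) : corr φ (pd i a) x = -corr (pd i φ) a x := by
  have hc : Continuous (pd i a) := (ha.continuous_fderiv one_ne_zero).clm_apply continuous_const
  have hs : ∀ r, fderiv ℝ (fun r => a (x + r)) r (e d i) = pd i a (x + r) := by
    intro r
    rw [fderiv_comp_add_left]; rfl
  have h1 := integral_mul_fderiv_eq_neg_fderiv_mul_of_integrable (μ := (volume : Measure (Euc d)))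
    (f := φ) (g := fun r => a (x + r)) (v := e d i)
    ((h.pd i).integrable_mul ha.continuous x)
    (by simp only [hs]; exact h.integrable_mul hc x)
    (h.integrable_mul ha.continuous x)
    (fun y _ => (h.smooth.differentiable (by simp)) y)
    (fun y _ => ((ha.differentiable one_ne_zero).comp (by fun_prop)) y)
  simp only [hs] at h1
  exact h1

theorem integral_pd {d : ℕ} {φ : Euc d → ℝ} (h : Ker φ) (i : Fin d) : ∫ r, pd i φ r = 0 := by
  have h1 := corr_pd h (contDiff_const (c := (1 : ℝ))) i 0
  have h2 : pd i (fun _ : Euc d => (1 : ℝ)) = fun _ => 0 := by funext y; simp [pd]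
  rw [h2] at h1
  simpa [corr, eq_comm] using h1

theorem corr_lap {d : ℕ} {φ ρ : Euc d → ℝ} (h : Ker φ) (hρ : ContDiff ℝ 2 ρ) (x : Euc d) :
    corr φ (lap ρ) x = ∑ k, corr (pd k (pd k φ)) ρ x := by
  have h1 : ∀ k, ContDiff ℝ 1 (pd k ρ) := fun k =>
    (hρ.fderiv_right (m := 1) (by norm_num)).clm_apply contDiff_const
  have hc : ∀ k, Continuous (pd k (pd k ρ)) := fun k =>
    ((h1 k).continuous_fderiv one_ne_zero).clm_apply continuous_const
  have h2 : corr φ (lap ρ) x = ∑ k, corr φ (pd k (pd k ρ)) x := by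
    simp only [corr, lap, Finset.mul_sum]
    exact integral_finsetSum _ fun k _ => h.integrable_mul (hc k) x
  rw [h2]
  refine Finset.sum_congr rfl fun k _ => ?_
  rw [corr_pd h (h1 k), corr_pd (h.pd k) (hρ.of_le (by norm_num)), neg_neg]

/-! ### Rescaled kernels -/

theorem pd_resc {d : ℕ} {H : Euc d → ℝ} {ℓ : ℝ} (i : Fin d) :
    pd i (resc H ℓ) = fun r => ℓ⁻¹ * resc (pd i H) ℓ r := by
  funext r
  have : resc H ℓ = (ℓ ^ d)⁻¹ • (fun r => H (ℓ⁻¹ • r)) := rfl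
  rw [this, pd, fderiv_const_smul_field, Pi.smul_apply, fderiv_comp_smul]
  simp [resc, pd]
  ring

theorem pd_const_mul {d : ℕ} (c : ℝ) (f : Euc d → ℝ) (i : Fin d) :
    pd i (fun r => c * f r) = fun r => c * pd i f r := by
  funext r
  have : (fun r => c * f r) = c • f := rfl
  rw [this, pd, fderiv_const_smul_field]
  simp [pd]

theorem Ker.resc {d : ℕ} {H : Euc d → ℝ} (h : Ker H) {ℓ : ℝ} (hℓ : 0 < ℓ) : Ker (resc H ℓ) := by
  refine ⟨contDiff_const.mul (h.smooth.comp (contDiff_const_smul _)), ?_⟩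
  exact (h.cpt.comp_homeomorph (Homeomorph.smulOfNeZero ℓ⁻¹ (inv_ne_zero hℓ.ne'))).mul_left

theorem integral_abs_resc {d : ℕ} (H : Euc d → ℝ) {ℓ : ℝ} (hℓ : 0 < ℓ) :
    ∫ r, |resc H ℓ r| = ∫ r, |H r| := by
  simp only [resc, abs_mul]
  rw [integral_const_mul, Measure.integral_comp_inv_smul_of_nonneg volume (fun r => |H r|) hℓ.le]
  have : ℓ ^ d ≠ 0 := by positivity
  simp [abs_of_pos hℓ]
  field_simp

theorem resc_eq_zero {d : ℕ} {H : Euc d → ℝ} (hs : tsupport H ⊆ ball 0 1) {ℓ : ℝ} (hℓ : 0 < ℓ)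
    {r : Euc d} (hr : r ∉ ball (0 : Euc d) ℓ) : resc H ℓ r = 0 := by
  have : H (ℓ⁻¹ • r) = 0 := by
    by_contra hne
    have h1 := hs (subset_tsupport _ hne)
    rw [mem_ball_zero_iff, norm_smul, norm_inv, Real.norm_of_nonneg hℓ.le, inv_mul_lt_iff₀ hℓ,
      mul_one] at h1
    exact hr (mem_ball_zero_iff.2 h1)
  simp [resc, this]

/-! ### Bounds on correlations -/

/-- The `L¹`–`L∞` bound for a field bounded by `B` on the ball carrying the kernel. -/
theorem abs_integral_resc_mul_le {d : ℕ} {H b : Euc d → ℝ} (h : Ker H)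
    (hs : tsupport H ⊆ ball 0 1) {ℓ B : ℝ} (hℓ : 0 < ℓ)
    (hb : ∀ r ∈ ball (0 : Euc d) ℓ, |b r| ≤ B) :
    |∫ r, resc H ℓ r * b r| ≤ (∫ r, |H r|) * B := by
  rw [← integral_abs_resc H hℓ, ← integral_mul_const]
  refine norm_integral_le_of_norm_le (f := fun r => resc H ℓ r * b r)
    ((h.resc hℓ).integrable.abs.mul_const B) (.of_forall fun r => ?_)
  rw [Real.norm_eq_abs, abs_mul]
  by_cases hr : r ∈ ball (0 : Euc d) ℓ
  · exact mul_le_mul_of_nonneg_left (hb r hr) (abs_nonneg _)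
  · simp [resc_eq_zero hs hℓ hr]

theorem tsupport_pd {d : ℕ} {H : Euc d → ℝ} (hs : tsupport H ⊆ ball 0 1) (i : Fin d) :
    tsupport (pd i H) ⊆ ball 0 1 :=
  (tsupport_fderiv_apply_subset ℝ (e d i)).trans hs

theorem abs_incr_le {d : ℕ} {ρ : Euc d → ℝ} {ρmin R : ℝ} (h1 : ∀ y, ρmin ≤ ρ y)
    (h2 : ∀ y, ρ y ≤ R) (x : Euc d) {ℓ : ℝ} {r : Euc d} (hr : r ∈ ball (0 : Euc d) ℓ) :
    |ρ (x + r) - ρ x| ≤ supIncr ρ ℓ x := by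
  have hR : ∀ r, ‖incr ρ r x‖ ≤ R - ρmin := fun r => by
    rw [incr, Real.norm_eq_abs, abs_le]
    constructor <;> linarith [h1 x, h2 x, h1 (x + r), h2 (x + r)]
  have h0 : 0 ≤ R - ρmin := by linarith [h1 x, h2 x]
  have hb : BddAbove (Set.range fun r => ⨆ (_ : r ∈ ball (0 : Euc d) ℓ), ‖incr ρ r x‖) :=
    ⟨R - ρmin, by
      rintro _ ⟨r, rfl⟩
      exact Real.iSup_le (fun _ => hR r) h0⟩
  have := le_ciSup hb r
  simpa [hr, supIncr, incr] using this

theorem supIncr_nonneg {d : ℕ} (ρ : Euc d → ℝ) (ℓ : ℝ) (x : Euc d) : 0 ≤ supIncr ρ ℓ x :=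
  Real.iSup_nonneg fun _ => Real.iSup_nonneg fun _ => norm_nonneg _

/-- The Laplacian part of the stress: the two derivatives on `ρ` join the one on the kernel, and
the vanishing mean of the resulting kernel turns `ρ` into its increments. -/
theorem abs_corr_lap_le {d : ℕ} {G ρ : Euc d → ℝ} (h : Ker G) (hs : tsupport G ⊆ ball 0 1)
    (hρ : ContDiff ℝ 2 ρ) {ρmin R : ℝ} (h1 : ∀ y, ρmin ≤ ρ y) (h2 : ∀ y, ρ y ≤ R)
    {ℓ : ℝ} (hℓ : 0 < ℓ) (x : Euc d) (i : Fin d) :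
    |corr (pd i (resc G ℓ)) (lap ρ) x| ≤
      (∑ k, ∫ r, |pd k (pd k (pd i G)) r|) * ((ℓ ^ 3)⁻¹ * supIncr ρ ℓ x) := by
  rw [corr_lap ((h.resc hℓ).pd i) hρ, Finset.sum_mul]
  refine (Finset.abs_sum_le_sum_abs _ _).trans (Finset.sum_le_sum fun k _ => ?_)
  have hK : Ker (pd k (pd k (pd i (resc G ℓ)))) := (((h.resc hℓ).pd i).pd k).pd k
  have h0 : corr (pd k (pd k (pd i (resc G ℓ)))) ρ x
      = ∫ r, pd k (pd k (pd i (resc G ℓ))) r * (ρ (x + r) - ρ x) := by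
    simp only [mul_sub]
    rw [integral_sub (hK.integrable_mul hρ.continuous x) (hK.integrable.mul_const _),
      integral_mul_const, integral_pd (((h.resc hℓ).pd i).pd k)]
    simp [corr]
  have h3 : pd k (pd k (pd i (resc G ℓ)))
      = fun r => (ℓ ^ 3)⁻¹ * resc (pd k (pd k (pd i G))) ℓ r := by
    simp only [pd_resc, pd_const_mul]
    funext r
    ring
  rw [h0, h3]
  simp only [mul_assoc]
  rw [integral_const_mul, abs_mul, abs_of_pos (by positivity), mul_left_comm]
  exact mul_le_mul_of_nonneg_left
    (abs_integral_resc_mul_le (((h.pd i).pd k).pd k)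
      (tsupport_pd (tsupport_pd (tsupport_pd hs i) k) k) hℓ
      fun r hr => abs_incr_le h1 h2 x hr) (by positivity)

theorem abs_corr_pd_le {d : ℕ} {G b : Euc d → ℝ} (h : Ker G) (hs : tsupport G ⊆ ball 0 1)
    {B : ℝ} (hb : ∀ y, |b y| ≤ B) {ℓ : ℝ} (hℓ : 0 < ℓ) (x : Euc d) (i : Fin d) :
    |corr (pd i (resc G ℓ)) b x| ≤ (∫ r, |pd i G r|) * (ℓ⁻¹ * B) := by
  rw [corr, pd_resc]
  simp only [mul_assoc]
  rw [integral_const_mul, abs_mul, abs_of_pos (by positivity), mul_left_comm]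
  exact mul_le_mul_of_nonneg_left
    (abs_integral_resc_mul_le (h.pd i) (tsupport_pd hs i) hℓ fun r _ => hb _) (by positivity)

/-! ### The gradient of the square root -/

theorem norm_gradient_sqrt_sq_le {d : ℕ} {ρ : Euc d → ℝ} {ρmin K : ℝ} (hρ : ContDiff ℝ 2 ρ)
    (h0 : 0 < ρmin) (h1 : ∀ y, ρmin ≤ ρ y) (hK : ∀ y, ‖gradient ρ y‖ ≤ K) (y : Euc d) :
    ‖gradient (fun y => Real.sqrt (ρ y)) y‖ ^ 2 ≤ K ^ 2 / (4 * ρmin) := by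
  have hy : 0 < ρ y := h0.trans_le (h1 y)
  have hn : ∀ f : Euc d → ℝ, ‖gradient f y‖ = ‖fderiv ℝ f y‖ := fun f => by simp [gradient]
  rw [hn, fderiv_sqrt (hρ.differentiable (by norm_num) y) hy.ne', norm_smul, ← hn ρ, mul_pow,
    Real.norm_eq_abs, sq_abs, div_pow, mul_pow, Real.sq_sqrt hy.le, one_pow, one_div_mul_eq_div]
  norm_num
  have := h1 y
  have := hK y
  gcongr

theorem continuous_gradient_sqrt {d : ℕ} {ρ : Euc d → ℝ} (hρ : ContDiff ℝ 2 ρ)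
    (hp : ∀ y, 0 < ρ y) : Continuous (gradient (fun y => Real.sqrt (ρ y))) :=
  (InnerProductSpace.toDual ℝ (Euc d)).symm.continuous.comp
    ((hρ.sqrt fun y => (hp y).ne').continuous_fderiv (by norm_num))

theorem continuous_lap {d : ℕ} {ρ : Euc d → ℝ} (hρ : ContDiff ℝ 2 ρ) : Continuous (lap ρ) := by
  have h1 : ∀ k, ContDiff ℝ 1 (pd k ρ) := fun k =>
    (hρ.fderiv_right (m := 1) (by norm_num)).clm_apply contDiff_const
  exact continuous_finsetSum _ fun k _ =>
    ((h1 k).continuous_fderiv one_ne_zero).clm_apply continuous_const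

theorem abs_pd_cgStress_le {d : ℕ} {G ρ : Euc d → ℝ} (h : Ker G) (hs : tsupport G ⊆ ball 0 1)
    (hρ : ContDiff ℝ 2 ρ) {ρmin R K : ℝ} (h0 : 0 < ρmin) (h1 : ∀ y, ρmin ≤ ρ y)
    (h2 : ∀ y, ρ y ≤ R) (hK : ∀ y, ‖gradient ρ y‖ ≤ K)
    (hb m : ℝ) {ℓ : ℝ} (hℓ : 0 < ℓ) (x : Euc d) (i j : Fin d) :
    |pd i (fun y => cgStress G ℓ hb m ρ y i j) x| ≤
      (hb ^ 2 / m ^ 2) * ((∑ k, ∫ r, |pd k (pd k (pd i G)) r|) + ∫ r, |pd i G r|) *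
        ((ℓ ^ 3)⁻¹ * supIncr ρ ℓ x + ℓ⁻¹ * K ^ 2 / ρmin) := by
  set g := gradient (fun y => Real.sqrt (ρ y)) with hg
  set δ : ℝ := if i = j then 1 else 0 with hδ
  have hδ1 : |δ| ≤ 1 := by rw [hδ]; split_ifs <;> simp
  have hgc : Continuous g := continuous_gradient_sqrt hρ fun y => h0.trans_le (h1 y)
  have hcb : Continuous fun z => g z i * g z j := by fun_prop
  have hcl := continuous_lap hρ
  have hbd : ∀ y, |g y i * g y j| ≤ K ^ 2 / (4 * ρmin) := fun y => by
    rw [abs_mul]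
    refine le_trans ?_ (norm_gradient_sqrt_sq_le hρ h0 h1 hK y)
    rw [sq]
    exact mul_le_mul (PiLp.norm_apply_le (g y) i) (PiLp.norm_apply_le (g y) j) (abs_nonneg _)
      (norm_nonneg _)
  have hcq : Continuous fun z => qStress hb m ρ z i j := by
    change Continuous fun z => (hb ^ 2 / (4 * m ^ 2)) * lap ρ z * δ
      - (hb ^ 2 / m ^ 2) * (g z i * g z j)
    fun_prop
  have hKer := (h.resc hℓ).pd i
  have e1 : pd i (fun y => cgStress G ℓ hb m ρ y i j) x =
      -corr (pd i (resc G ℓ)) (fun z => qStress hb m ρ z i j) x :=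
    pd_corr (h.resc hℓ) hcq i x
  have e2 : corr (pd i (resc G ℓ)) (fun z => qStress hb m ρ z i j) x =
      (hb ^ 2 / m ^ 2) * (δ / 4 * corr (pd i (resc G ℓ)) (lap ρ) x
        - corr (pd i (resc G ℓ)) (fun z => g z i * g z j) x) := by
    simp only [corr]
    rw [← integral_const_mul (δ / 4),
      ← integral_sub ((hKer.integrable_mul hcl x).const_mul _) (hKer.integrable_mul hcb x),
      ← integral_const_mul]
    refine integral_congr_ae (.of_forall fun r => ?_)
    change pd i (resc G ℓ) r * ((hb ^ 2 / (4 * m ^ 2)) * lap ρ (x + r) * δ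
      - (hb ^ 2 / m ^ 2) * (g (x + r) i * g (x + r) j)) = _
    have : hb ^ 2 / (4 * m ^ 2) = hb ^ 2 / m ^ 2 * (1 / 4) := by
      rw [div_mul_div_comm, mul_one, mul_comm 4]
    rw [this]
    ring
  rw [e1, e2, abs_neg, abs_mul, abs_of_nonneg (by positivity), mul_assoc]
  refine mul_le_mul_of_nonneg_left ?_ (by positivity)
  have b1 := abs_corr_lap_le h hs hρ h1 h2 hℓ x i
  have b2 := abs_corr_pd_le h hs hbd hℓ x i
  have n1 : 0 ≤ ∑ k, ∫ r, |pd k (pd k (pd i G)) r| :=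
    Finset.sum_nonneg fun k _ => integral_nonneg fun r => abs_nonneg _
  have n2 : 0 ≤ ∫ r, |pd i G r| := integral_nonneg fun r => abs_nonneg _
  have n3 : 0 ≤ (ℓ ^ 3)⁻¹ * supIncr ρ ℓ x := mul_nonneg (by positivity) (supIncr_nonneg _ _ _)
  have n4 : 0 ≤ ℓ⁻¹ * K ^ 2 / ρmin := by positivity
  have q1 : |δ / 4 * corr (pd i (resc G ℓ)) (lap ρ) x|
      ≤ |corr (pd i (resc G ℓ)) (lap ρ) x| := by
    rw [abs_mul, abs_div]
    refine mul_le_of_le_one_left (abs_nonneg _) ?_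
    norm_num
    linarith
  have q2 : ℓ⁻¹ * (K ^ 2 / (4 * ρmin)) ≤ ℓ⁻¹ * K ^ 2 / ρmin := by
    rw [mul_div_assoc]
    gcongr
    linarith
  have q3 := mul_le_mul_of_nonneg_left q2 n2
  have q4 := abs_sub (δ / 4 * corr (pd i (resc G ℓ)) (lap ρ) x)
    (corr (pd i (resc G ℓ)) (fun z => g z i * g z j) x)
  nlinarith [mul_nonneg n1 n4, mul_nonneg n2 n3]

theorem norm_le_sum_abs {d : ℕ} (v : Euc d) : ‖v‖ ≤ ∑ j, |v j| := by
  conv_lhs => rw [← (EuclideanSpace.basisFun (Fin d) ℝ).sum_repr v]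
  refine (norm_sum_le _ _).trans (Finset.sum_le_sum fun j _ => ?_)
  rw [norm_smul]
  simp

end QT

open QT in
/-- large-scale quantum-stress force bound
`|(1/ρ̄_ℓ)∇·Σ̄_ℓ(x)| ≤ C (ħ²/m²) M [ℓ^{−3} δρ(ℓ;x) + ℓ^{−1} K²/ρ_min]`,
with `C` depending only on `G, d`. -/
theorem norm_divCgStress_le {d : ℕ} (hd : 1 ≤ d)
    (G : Euc d → ℝ) (hG : IsMollifier G) :
    ∃ C > 0, ∀ (hb m : ℝ), 0 < hb → 0 < m →
      ∀ (ρ : Euc d → ℝ) (ρmin R K : ℝ), ContDiff ℝ 2 ρ → 0 < ρmin →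
      (∀ y, ρmin ≤ ρ y) → (∀ y, ρ y ≤ R) → (∀ y, ‖gradient ρ y‖ ≤ K) →
      ∀ (x : Euc d) (ℓ M : ℝ), 0 < ℓ → 0 < M → 1 / M ≤ cg G ℓ ρ x →
      ‖(cg G ℓ ρ x)⁻¹ • divCgStress G ℓ hb m ρ x‖ ≤
        C * (hb ^ 2 / m ^ 2) * M *
          ((ℓ ^ 3)⁻¹ * supIncr ρ ℓ x + ℓ⁻¹ * K ^ 2 / ρmin) := by
  have hker : Ker G := ⟨hG.smooth, HasCompactSupport.intro (isCompact_closedBall (0 : Euc d) 1)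
    fun r hr => image_eq_zero_of_notMem_tsupport fun h => hr (ball_subset_closedBall (hG.supp h))⟩
  set A : Fin d → ℝ := fun i => (∑ k, ∫ r, |pd k (pd k (pd i G)) r|) + ∫ r, |pd i G r| with hA
  have hA0 : ∀ i, 0 ≤ A i := fun i => add_nonneg
    (Finset.sum_nonneg fun k _ => integral_nonneg fun r => abs_nonneg _)
    (integral_nonneg fun r => abs_nonneg _)
  set S : ℝ := ∑ _j : Fin d, ∑ i, A i with hS
  have hS0 : 0 ≤ S := Finset.sum_nonneg fun _ _ => Finset.sum_nonneg fun i _ => hA0 i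
  refine ⟨1 + S, by positivity, ?_⟩
  intro hb m _ _ ρ ρmin R K hρ h0 h1 h2 hK x ℓ M hℓ hM hcg
  set X : ℝ := (ℓ ^ 3)⁻¹ * supIncr ρ ℓ x + ℓ⁻¹ * K ^ 2 / ρmin with hX
  have hX0 : 0 ≤ X := add_nonneg (mul_nonneg (by positivity) (supIncr_nonneg _ _ _))
    (by positivity)
  have hdiv : ‖divCgStress G ℓ hb m ρ x‖ ≤ (hb ^ 2 / m ^ 2) * S * X := by
    refine (norm_le_sum_abs _).trans ?_
    rw [hS, Finset.mul_sum, Finset.sum_mul]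
    refine Finset.sum_le_sum fun j _ => ?_
    rw [Finset.mul_sum, Finset.sum_mul]
    change |∑ i, pd i (fun y => cgStress G ℓ hb m ρ y i j) x| ≤ _
    exact (Finset.abs_sum_le_sum_abs _ _).trans (Finset.sum_le_sum fun i _ =>
      abs_pd_cgStress_le hker hG.supp hρ h0 h1 h2 hK hb m hℓ x i j)
  have hM' : 0 < 1 / M := by positivity
  have hinv : (cg G ℓ ρ x)⁻¹ ≤ M := by
    rw [inv_le_comm₀ (hM'.trans_le hcg) hM, ← one_div]
    exact hcg
  rw [norm_smul, norm_inv, Real.norm_of_nonneg (hM'.trans_le hcg).le]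
  calc (cg G ℓ ρ x)⁻¹ * ‖divCgStress G ℓ hb m ρ x‖
      ≤ M * ((hb ^ 2 / m ^ 2) * S * X) := mul_le_mul hinv hdiv (norm_nonneg _) hM.le
    _ ≤ M * ((hb ^ 2 / m ^ 2) * (1 + S) * X) := by gcongr; linarith
    _ = (1 + S) * (hb ^ 2 / m ^ 2) * M * X := by ring
end
end

section
/- Let 𝓛 > 0, let v : ℝ^d → ℝ^d be a bounded measurable 𝓛-periodic vector field, let p ∈ [1,∞], and let 0 < ℓ ≤ Δ. Then the increments of the coarse-grained field at scale Δ satisfy sup_{|s|≤ℓ} ‖ v̄_Δ(· + s) − v̄_Δ(·) ‖_p ≤ (ℓ/Δ) (∫_{ℝ^d} |∇G(r)| dr) · sup_{|r|<2Δ} ‖δv(r;·)‖_p. -/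
/-!
Shifting the integration variable moves the increment onto the mollifier, and because the
difference of two translates of `G_Δ` integrates to zero, `v x` can be subtracted for free
(`cg_translate_sub`):
`v̄_Δ(x + s) - v̄_Δ(x) = ∫ (G_Δ(r - s) - G_Δ(r)) δv(r; x) dr`.
The kernel vanishes for `|r| ≥ Δ + |s|`, and `Δ + |s| ≤ 2Δ`, so only increments with `|r| < 2Δ`
enter. Minkowski's integral inequality (`eLpNorm_lintegral_le`, obtained from Jensen's inequality
and Tonelli for `p < ∞`, and from Fubini for null sets at `p = ∞`) bounds the `L^p` norm by the
supremum of `‖δv(r; ·)‖_p` times the `L¹` norm of the kernel. The latter is at most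
`|s| ∫ |∇G_Δ| = (|s|/Δ) ∫ |∇G|`, by the fundamental theorem of calculus along segments
(`lintegral_enorm_resc_translate_sub_le`).
-/

open MeasureTheory Metric
open scoped RealInnerProductSpace ENNReal

noncomputable section

namespace QT

/-! ### Minkowski's integral inequality -/

/-- Jensen's inequality for a finite measure, in the unnormalised form
`(∫ f dν)^q ≤ ν(univ)^(q-1) ∫ f^q dν`. -/
lemma lintegral_rpow_le_measure_univ_mul {β : Type*} [MeasurableSpace β] (ν : Measure β)
    {f : β → ℝ≥0∞} (hf : Measurable f) {q : ℝ} (hq : 1 ≤ q) :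
    (∫⁻ r, f r ∂ν) ^ q ≤ ν Set.univ ^ (q - 1) * ∫⁻ r, f r ^ q ∂ν := by
  have hq0 : 0 < q := by linarith
  have h := eLpNorm_le_eLpNorm_mul_rpow_measure_univ (μ := ν) (p := 1) (q := ENNReal.ofReal q)
    (by simpa using hq) hf.aestronglyMeasurable
  rw [eLpNorm_one_eq_lintegral_enorm,
    eLpNorm_eq_lintegral_rpow_enorm_toReal (by simpa using hq0) ENNReal.ofReal_ne_top,
    ENNReal.toReal_ofReal hq0.le] at h
  simp only [enorm_eq_self, ENNReal.toReal_one] at h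
  calc (∫⁻ r, f r ∂ν) ^ q
      ≤ ((∫⁻ r, f r ^ q ∂ν) ^ (1 / q) * ν Set.univ ^ (1 / 1 - 1 / q)) ^ q := by gcongr
    _ = ν Set.univ ^ (q - 1) * ∫⁻ r, f r ^ q ∂ν := by
        rw [ENNReal.mul_rpow_of_nonneg _ _ hq0.le, ← ENNReal.rpow_mul, ← ENNReal.rpow_mul,
          one_div_mul_cancel hq0.ne', ENNReal.rpow_one, mul_comm]
        congr 2
        field_simp

/-- Minkowski's integral inequality against a finite measure, with the slices bounded uniformly:
an average of functions of `L^p` norm at most `S` has norm at most `S` times the total mass. -/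
lemma eLpNorm_lintegral_le {α β : Type*} [MeasurableSpace α] [MeasurableSpace β]
    (μ : Measure α) [SFinite μ] (ν : Measure β) [IsFiniteMeasure ν]
    {F : α → β → ℝ≥0∞} (hF : Measurable (Function.uncurry F)) {p : ℝ≥0∞} (hp : 1 ≤ p)
    {S : ℝ≥0∞} (hS : ∀ᵐ r ∂ν, eLpNorm (fun x => F x r) p μ ≤ S) :
    eLpNorm (fun x => ∫⁻ r, F x r ∂ν) p μ ≤ ν Set.univ * S := by
  rcases eq_or_ne p ∞ with rfl | hpt
  · have h1 : ∀ᵐ r ∂ν, ∀ᵐ x ∂μ, F x r ≤ S := by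
      filter_upwards [hS] with r hr
      rw [eLpNorm_exponent_top] at hr
      filter_upwards [enorm_ae_le_eLpNormEssSup (fun x => F x r) μ] with x hx
      exact le_trans (by simpa using hx) hr
    have h2 : ∀ᵐ x ∂μ, ∀ᵐ r ∂ν, F x r ≤ S :=
      (Measure.ae_ae_comm (p := fun x r => F x r ≤ S)
        (measurableSet_le hF measurable_const)).2 h1
    rw [eLpNorm_exponent_top]
    refine eLpNormEssSup_le_of_ae_enorm_bound ?_
    filter_upwards [h2] with x hx
    calc ‖∫⁻ r, F x r ∂ν‖ₑ = ∫⁻ r, F x r ∂ν := by simp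
      _ ≤ ∫⁻ _, S ∂ν := lintegral_mono_ae hx
      _ = ν Set.univ * S := by rw [lintegral_const, mul_comm]
  · have hp0 : p ≠ 0 := (zero_lt_one.trans_le hp).ne'
    have hq : 1 ≤ p.toReal := by
      simpa using (ENNReal.toReal_le_toReal ENNReal.one_ne_top hpt).2 hp
    set q := p.toReal
    have hq0 : 0 < q := by linarith
    have hS' : ∀ᵐ r ∂ν, ∫⁻ x, F x r ^ q ∂μ ≤ S ^ q := by
      filter_upwards [hS] with r hr
      rw [eLpNorm_eq_lintegral_rpow_enorm_toReal hp0 hpt, one_div,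
        ENNReal.rpow_inv_le_iff hq0] at hr
      simpa using hr
    rw [eLpNorm_eq_lintegral_rpow_enorm_toReal hp0 hpt, one_div, ENNReal.rpow_inv_le_iff hq0]
    simp only [enorm_eq_self]
    calc ∫⁻ x, (∫⁻ r, F x r ∂ν) ^ q ∂μ
        ≤ ∫⁻ x, ν Set.univ ^ (q - 1) * ∫⁻ r, F x r ^ q ∂ν ∂μ :=
          lintegral_mono fun x =>
            lintegral_rpow_le_measure_univ_mul ν (hF.comp measurable_prodMk_left) hq
      _ = ν Set.univ ^ (q - 1) * ∫⁻ r, ∫⁻ x, F x r ^ q ∂μ ∂ν := by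
          have hFq : Measurable (Function.uncurry fun x r => F x r ^ q) := hF.pow_const q
          have hFi : Measurable fun x => ∫⁻ r, F x r ^ q ∂ν := hFq.lintegral_prod_right'
          rw [lintegral_const_mul _ hFi,
            lintegral_lintegral_swap hFq.aemeasurable]
      _ ≤ ν Set.univ ^ (q - 1) * ∫⁻ _, S ^ q ∂ν := by
          gcongr 1
          exact lintegral_mono_ae hS'
      _ = (ν Set.univ * S) ^ q := by
          rw [lintegral_const, mul_left_comm, ENNReal.mul_rpow_of_nonneg _ _ hq0.le, mul_comm]
          congr 1
          nth_rw 2 [← ENNReal.rpow_one (ν Set.univ)]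
          rw [← ENNReal.rpow_add_of_nonneg _ _ (by linarith) zero_le_one, sub_add_cancel]

/-- Minkowski's integral inequality for a signed kernel `w ∈ L¹`: only the slices with `w r ≠ 0`
need to satisfy the uniform bound. -/
lemma eLpNorm_integral_smul_le {α β E : Type*} [MeasurableSpace α] [MeasurableSpace β]
    [NormedAddCommGroup E] [NormedSpace ℝ E] (μ : Measure α) [SFinite μ] (lam : Measure β)
    {w : β → ℝ} (hw : Measurable w) (hwL : ∫⁻ r, ‖w r‖ₑ ∂lam ≠ ∞) {F : α → β → E}
    (hF : Measurable (Function.uncurry fun x r => ‖F x r‖ₑ)) {p : ℝ≥0∞} (hp : 1 ≤ p)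
    {S : ℝ≥0∞} (hS : ∀ r, w r ≠ 0 → eLpNorm (fun x => F x r) p μ ≤ S) :
    eLpNorm (fun x => ∫ r, w r • F x r ∂lam) p μ ≤ (∫⁻ r, ‖w r‖ₑ ∂lam) * S := by
  have hwm : Measurable fun r => ‖w r‖ₑ := hw.enorm
  have hfin : IsFiniteMeasure (lam.withDensity fun r => ‖w r‖ₑ) :=
    isFiniteMeasure_withDensity hwL
  have hS' : ∀ᵐ r ∂(lam.withDensity fun r => ‖w r‖ₑ),
      eLpNorm (fun x => ‖F x r‖ₑ) p μ ≤ S := by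
    refine (ae_withDensity_iff hwm).2 (.of_forall fun r hr => ?_)
    rw [eLpNorm_enorm]
    exact hS r (by simpa using hr)
  have key := eLpNorm_lintegral_le μ _ hF hp hS'
  rw [withDensity_apply _ MeasurableSet.univ, Measure.restrict_univ] at key
  refine le_trans (eLpNorm_mono_enorm fun x => ?_) key
  have hFx : Measurable fun r => ‖F x r‖ₑ := hF.comp measurable_prodMk_left
  rw [enorm_eq_self, lintegral_withDensity_eq_lintegral_mul _ hwm hFx]
  refine (enorm_integral_le_lintegral_enorm _).trans_eq (lintegral_congr fun r => ?_)
  rw [enorm_smul, Pi.mul_apply]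

variable {d : ℕ}

/-! ### The translated mollifier in `L¹` -/

/-- Translation by `s` moves a `C¹` function by at most `|s| ∫|∇G|` in `L¹`: integrate the
derivative along the segment from `u` to `u - s`, then use translation invariance. -/
lemma lintegral_enorm_translate_sub_le {G : Euc d → ℝ} (hG : ContDiff ℝ 1 G) (s : Euc d) :
    ∫⁻ u, ‖G (u - s) - G u‖ₑ ≤ ‖s‖ₑ * ∫⁻ u, ‖gradient G u‖ₑ := by
  have hgrad (u : Euc d) : ‖gradient G u‖ₑ = ‖fderiv ℝ G u‖ₑ := by
    rw [← toDual_gradient, enorm_eq_iff_norm_eq, LinearIsometryEquiv.norm_map]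
  have hcont : Continuous fun z => ‖fderiv ℝ G z‖ₑ := (hG.continuous_fderiv one_ne_zero).enorm
  have hpt (u : Euc d) : ‖G (u - s) - G u‖ₑ ≤
      ∫⁻ t in Set.Icc (0 : ℝ) 1, ‖fderiv ℝ G (u - t • s)‖ₑ * ‖s‖ₑ := by
    have hγ : ContDiff ℝ 1 fun t : ℝ => G (u - t • s) := by fun_prop
    have h := enorm_sub_le_lintegral_deriv_of_contDiffOn_Icc hγ.contDiffOn (zero_le_one' ℝ)
    simp only [one_smul, zero_smul, sub_zero] at h
    refine h.trans (lintegral_mono fun t => ?_)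
    have hl : HasDerivAt (fun t : ℝ => u - t • s) (-s) t := by
      simpa using ((hasDerivAt_id t).smul_const s).const_sub u
    have hd : HasDerivAt (fun t : ℝ => G (u - t • s)) (fderiv ℝ G (u - t • s) (-s)) t :=
      ((hG.differentiable one_ne_zero _).hasFDerivAt).comp_hasDerivAt t hl
    dsimp only
    rw [hd.deriv]
    simpa using (fderiv ℝ G (u - t • s)).le_opENorm (-s)
  calc ∫⁻ u, ‖G (u - s) - G u‖ₑ
      ≤ ∫⁻ u, ∫⁻ t in Set.Icc (0 : ℝ) 1, ‖fderiv ℝ G (u - t • s)‖ₑ * ‖s‖ₑ :=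
        lintegral_mono hpt
    _ = ∫⁻ t in Set.Icc (0 : ℝ) 1, ∫⁻ u, ‖fderiv ℝ G (u - t • s)‖ₑ * ‖s‖ₑ := by
        refine lintegral_lintegral_swap (Measurable.aemeasurable ?_)
        have hz : Continuous fun z : Euc d × ℝ => z.1 - z.2 • s := by fun_prop
        exact (hcont.comp hz).measurable.mul_const _
    _ = ∫⁻ _ in Set.Icc (0 : ℝ) 1, (∫⁻ u, ‖fderiv ℝ G u‖ₑ) * ‖s‖ₑ := by
        refine lintegral_congr fun t => ?_
        have hm : Measurable fun u => ‖fderiv ℝ G (u - t • s)‖ₑ :=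
          hcont.measurable.comp (measurable_id.sub_const _)
        rw [lintegral_mul_const _ hm,
          lintegral_sub_right_eq_self (fun u => ‖fderiv ℝ G u‖ₑ)]
    _ = ‖s‖ₑ * ∫⁻ u, ‖gradient G u‖ₑ := by
        simp [hgrad, mul_comm]

lemma lintegral_comp_inv_smul (f : Euc d → ℝ≥0∞) (hf : Measurable f) {Δ : ℝ} (hΔ : 0 < Δ) :
    ∫⁻ r, f (Δ⁻¹ • r) = ENNReal.ofReal (Δ ^ d) * ∫⁻ u, f u := by
  rw [← lintegral_map (f := f) (g := fun r : Euc d => Δ⁻¹ • r) hf (measurable_const_smul _),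
    Measure.map_addHaar_smul _ (inv_ne_zero hΔ.ne'), lintegral_smul_measure]
  simp [abs_of_pos hΔ]

lemma contDiff_resc {G : Euc d → ℝ} (hG : IsMollifier G) (Δ : ℝ) : ContDiff ℝ 1 (resc G Δ) := by
  have h : ContDiff ℝ 1 G := hG.smooth.of_le (by exact_mod_cast le_top)
  unfold resc
  fun_prop

lemma resc_eq_zero_s17 {G : Euc d → ℝ} (hG : IsMollifier G) {Δ : ℝ} (hΔ : 0 < Δ) {r : Euc d}
    (hr : Δ ≤ ‖r‖) : resc G Δ r = 0 := by
  have : G (Δ⁻¹ • r) = 0 := by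
    refine image_eq_zero_of_notMem_tsupport fun h => ?_
    have := hG.supp h
    rw [mem_ball_zero_iff, norm_smul, norm_inv, Real.norm_of_nonneg hΔ.le, inv_mul_lt_iff₀ hΔ]
      at this
    linarith
  simp [resc, this]

lemma integrable_resc {G : Euc d → ℝ} (hG : IsMollifier G) {Δ : ℝ} (hΔ : 0 < Δ) :
    Integrable (resc G Δ) := by
  refine (contDiff_resc hG Δ).continuous.integrable_of_hasCompactSupport ?_
  refine HasCompactSupport.of_support_subset_isCompact (isCompact_closedBall (0 : Euc d) Δ) ?_
  intro r hr
  rw [mem_closedBall_zero_iff]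
  by_contra! h
  exact hr (resc_eq_zero_s17 hG hΔ h.le)

lemma integrable_gradient {G : Euc d → ℝ} (hG : IsMollifier G) : Integrable (gradient G) := by
  have hc : HasCompactSupport G :=
    (isCompact_closedBall (0 : Euc d) 1).of_isClosed_subset (isClosed_tsupport G)
      (hG.supp.trans ball_subset_closedBall)
  have h1 : ContDiff ℝ 1 G := hG.smooth.of_le (by exact_mod_cast le_top)
  have : Integrable (fderiv ℝ G) :=
    (h1.continuous_fderiv one_ne_zero).integrable_of_hasCompactSupport (hc.fderiv ℝ)
  exact (InnerProductSpace.toDual ℝ (Euc d)).symm.toContinuousLinearEquiv.toContinuousLinearMap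
    |>.integrable_comp this

/-- The kernel of `v̄_Δ(· + s) - v̄_Δ` has `L¹` norm at most `(|s|/Δ) ∫|∇G|`. -/
lemma lintegral_enorm_resc_translate_sub_le {G : Euc d → ℝ} (hG : IsMollifier G) {Δ : ℝ}
    (hΔ : 0 < Δ) (s : Euc d) :
    ∫⁻ r, ‖resc G Δ (r - s) - resc G Δ r‖ₑ ≤
      ENNReal.ofReal (‖s‖ / Δ * ∫ r, ‖gradient G r‖) := by
  have h1 : ContDiff ℝ 1 G := hG.smooth.of_le (by exact_mod_cast le_top)
  have hd0 : 0 < Δ ^ d := by positivity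
  have hc : Continuous fun u => G (u - Δ⁻¹ • s) - G u := by
    have := h1.continuous
    fun_prop
  have hm : Measurable fun u => ‖G (u - Δ⁻¹ • s) - G u‖ₑ := hc.enorm.measurable
  calc ∫⁻ r, ‖resc G Δ (r - s) - resc G Δ r‖ₑ
      = ∫⁻ r, ENNReal.ofReal (Δ ^ d)⁻¹ * ‖G (Δ⁻¹ • r - Δ⁻¹ • s) - G (Δ⁻¹ • r)‖ₑ := by
        refine lintegral_congr fun r => ?_
        rw [resc, resc, ← mul_sub, enorm_mul, smul_sub,
          Real.enorm_of_nonneg (inv_nonneg.2 hd0.le)]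
    _ = ∫⁻ u, ‖G (u - Δ⁻¹ • s) - G u‖ₑ := by
        have hm' : Measurable fun r : Euc d => ‖G (Δ⁻¹ • r - Δ⁻¹ • s) - G (Δ⁻¹ • r)‖ₑ :=
          hm.comp (measurable_const_smul _)
        rw [lintegral_const_mul _ hm', lintegral_comp_inv_smul _ hm hΔ, ← mul_assoc, ← ENNReal.ofReal_mul (by positivity),
          inv_mul_cancel₀ hd0.ne', ENNReal.ofReal_one, one_mul]
    _ ≤ ‖Δ⁻¹ • s‖ₑ * ∫⁻ u, ‖gradient G u‖ₑ := lintegral_enorm_translate_sub_le h1 _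
    _ = ENNReal.ofReal (‖s‖ / Δ * ∫ r, ‖gradient G r‖) := by
        rw [ENNReal.ofReal_mul (by positivity), ofReal_integral_norm_eq_lintegral_enorm
          (integrable_gradient hG), ← ofReal_norm, norm_smul, norm_inv,
          Real.norm_of_nonneg hΔ.le, div_eq_inv_mul]

/-! ### Increments of the coarse-grained field -/

/-- Shifting the integration variable puts the increment on the mollifier; since the resulting
kernel has integral zero, the constant `v x` may be subtracted from the field. -/
lemma cg_translate_sub {G : Euc d → ℝ} (hG : IsMollifier G) {Δ : ℝ} (hΔ : 0 < Δ)
    {v : Euc d → Euc d} (hvm : Measurable v) {Cv : ℝ} (hvb : ∀ y, ‖v y‖ ≤ Cv) (x s : Euc d) :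
    cg G Δ v (x + s) - cg G Δ v x =
      ∫ r, (resc G Δ (r - s) - resc G Δ r) • incr v r x := by
  have hi := integrable_resc hG hΔ
  have his : Integrable fun r => resc G Δ (r - s) := hi.comp_sub_right s
  have hvx : AEStronglyMeasurable (fun r => v (x + r)) :=
    (hvm.comp (measurable_const_add x)).aestronglyMeasurable
  have hb : ∀ᵐ r : Euc d, ‖v (x + r)‖ ≤ Cv := .of_forall fun r => hvb _
  have e1 : Integrable fun r => resc G Δ (r - s) • v (x + r) := his.smul_bdd Cv hvx hb
  have e2 : Integrable fun r => resc G Δ r • v (x + r) := hi.smul_bdd Cv hvx hb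
  have hshift : cg G Δ v (x + s) = ∫ r, resc G Δ (r - s) • v (x + r) := by
    rw [cg, ← integral_sub_right_eq_self (fun r => resc G Δ r • v (x + s + r)) s]
    congr 1
    ext1 r
    congr 2
    abel
  have hzero : ∫ r, (resc G Δ (r - s) - resc G Δ r) • v x = 0 := by
    rw [integral_smul_const, integral_sub his hi, integral_sub_right_eq_self (resc G Δ) s,
      sub_self, zero_smul]
  calc cg G Δ v (x + s) - cg G Δ v x
      = ∫ r, (resc G Δ (r - s) • v (x + r) - resc G Δ r • v (x + r)) := by
        rw [hshift, cg, integral_sub e1 e2]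
    _ = ∫ r, (resc G Δ (r - s) • v (x + r) - resc G Δ r • v (x + r)
          - (resc G Δ (r - s) - resc G Δ r) • v x) := by
        have e3 : Integrable fun r => (resc G Δ (r - s) - resc G Δ r) • v x :=
          (his.sub hi).smul_const _
        have e12 : Integrable fun r => resc G Δ (r - s) • v (x + r) - resc G Δ r • v (x + r) :=
          e1.sub e2
        rw [integral_sub e12 e3, hzero, sub_zero]
    _ = _ := by
        congr 1
        ext1 r
        rw [incr, smul_sub, sub_smul _ _ (v (x + r))]

end QT

open QT in
/-- increments of the coarse-grained field at scale `Δ` satisfy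
`sup_{|s|≤ℓ} ‖v̄_Δ(·+s) − v̄_Δ‖_p ≤ (ℓ/Δ)(∫|∇G|) sup_{|r|<2Δ} ‖δv(r;·)‖_p` for `0 < ℓ ≤ Δ`. -/
theorem eLpNorm_incr_cg_le {d : ℕ} (hd : 1 ≤ d)
    (G : Euc d → ℝ) (hG : IsMollifier G) (𝓛 : ℝ) (h𝓛 : 0 < 𝓛)
    (v : Euc d → Euc d) (hvm : Measurable v) (Cv : ℝ) (hvb : ∀ y, ‖v y‖ ≤ Cv)
    (hvp : PeriodicF 𝓛 v) (p : ℝ≥0∞) (hp : 1 ≤ p)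
    (ℓ Δ : ℝ) (hℓ : 0 < ℓ) (hℓΔ : ℓ ≤ Δ) :
    (⨆ s ∈ closedBall (0 : Euc d) ℓ,
        eLpNorm (fun x => cg G Δ v (x + s) - cg G Δ v x) p (boxMeasure d 𝓛)) ≤
      ENNReal.ofReal (ℓ / Δ * ∫ r, ‖gradient G r‖) *
        ⨆ r ∈ ball (0 : Euc d) (2 * Δ), eLpNorm (incr v r) p (boxMeasure d 𝓛) := by
  have hΔ : 0 < Δ := hℓ.trans_le hℓΔ
  refine iSup₂_le fun s hs => ?_
  rw [mem_closedBall_zero_iff] at hs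
  have hw : Measurable fun r => resc G Δ (r - s) - resc G Δ r := by
    have := (contDiff_resc hG Δ).continuous
    exact Continuous.measurable (by fun_prop)
  have hwL := lintegral_enorm_resc_translate_sub_le hG hΔ s
  have hμ : SFinite (boxMeasure d 𝓛) := by unfold boxMeasure; infer_instance
  have hF : Measurable (Function.uncurry fun x r : Euc d => ‖incr v r x‖ₑ) := by
    unfold incr Function.uncurry
    fun_prop
  -- The kernel is supported where `|r - s| < Δ` or `|r| < Δ`, hence in `|r| < Δ + ℓ ≤ 2Δ`.
  have hsupp : ∀ r, resc G Δ (r - s) - resc G Δ r ≠ 0 → r ∈ ball (0 : Euc d) (2 * Δ) := by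
    intro r hr
    rw [mem_ball_zero_iff]
    by_contra! h
    apply hr
    have h1 : Δ ≤ ‖r - s‖ := by linarith [norm_sub_norm_le r s]
    rw [resc_eq_zero_s17 hG hΔ h1, resc_eq_zero_s17 hG hΔ (by linarith : Δ ≤ ‖r‖), sub_zero]
  have hS : ∀ r, resc G Δ (r - s) - resc G Δ r ≠ 0 →
      eLpNorm (fun x => incr v r x) p (boxMeasure d 𝓛) ≤
        ⨆ r ∈ ball (0 : Euc d) (2 * Δ), eLpNorm (incr v r) p (boxMeasure d 𝓛) := fun r hr =>
    le_iSup₂ (f := fun r (_ : r ∈ ball (0 : Euc d) (2 * Δ)) =>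
      eLpNorm (incr v r) p (boxMeasure d 𝓛)) r (hsupp r hr)
  have hfun : (fun x => cg G Δ v (x + s) - cg G Δ v x) =
      fun x => ∫ r, (resc G Δ (r - s) - resc G Δ r) • incr v r x :=
    funext fun x => cg_translate_sub hG hΔ hvm hvb x s
  rw [hfun]
  refine (eLpNorm_integral_smul_le (boxMeasure d 𝓛) volume hw
    (hwL.trans_lt ENNReal.ofReal_lt_top).ne hF hp hS).trans ?_
  have hI : 0 ≤ ∫ r, ‖gradient G r‖ := integral_nonneg fun r => norm_nonneg _
  refine mul_le_mul_left (hwL.trans (ENNReal.ofReal_le_ofReal ?_)) _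
  exact mul_le_mul_of_nonneg_right (div_le_div_of_nonneg_right hs hΔ.le) hI
end
end
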